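/- Let S be a semigroup with a finite choice of generators X via π : X⁺ → S, and suppose S has an ideal I which is a monoid with identity element e (that is, e ∈ I and e·i = i·e = i for all i ∈ I). Regard X as a choice of generators for I via the surjective semigroup homomorphism ρ : X⁺ → I with ρ(w) = e·π(w). Then γ^{S,X} = γ^{I,X}. -/

import Mathlib

/-!
The two cogrowth functions are sandwiched: `gammaFn π n ≤ gammaFn ρ n`, because `π u = π v` implies
`ρ u = ρ v`, and `gammaFn ρ n ≤ gammaFn π (n + 2 * k)`, where `k` is the length of a word `w`
representing `e`, because `(u, v) ↦ (w * u, w * v)` is injective and `π (w * u) = ρ u`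
(`gammaFn_le_gammaFn`). An index shift by a constant does not change an exponential growth rate
(`gammaRate_le_of_shift`), so the rates agree. The `limsup`s are real-valued, so they
have to be shown bounded; this follows from `gammaFn π n ≤ (2 * |X|) ^ n`, obtained by
encoding a pair of words as one word over `X ⊕ X` (`encode`).
-/

open Filter

/-- The global cogrowth function. -/
noncomputable def gammaFn {X : Type} {S : Type*} [Mul S]
    (π : FreeSemigroup X →ₙ* S) (n : ℕ) : ℕ :=
  Nat.card {p : FreeSemigroup X × FreeSemigroup X //
    p.1.length + p.2.length = n ∧ π p.1 = π p.2}

/-- The global cogrowth rate. -/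
noncomputable def gammaRate {X : Type} {S : Type*} [Mul S]
    (π : FreeSemigroup X →ₙ* S) : ℝ :=
  Filter.atTop.limsup (fun n : ℕ => (gammaFn π n : ℝ) ^ (1 / (n : ℝ)))

/-- An ideal of a semigroup. -/
def IsIdeal {S : Type*} [Semigroup S] (I : Set S) : Prop :=
  I.Nonempty ∧ ∀ a ∈ I, ∀ x : S, x * a ∈ I ∧ a * x ∈ I

/-- The list of letters of a nonempty word. -/
def letters {X : Type} (u : FreeSemigroup X) : List X := u.head :: u.tail

lemma letters_injective {X : Type} : Function.Injective (letters (X := X)) := by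
  rintro ⟨a, l⟩ ⟨b, m⟩ h
  simpa [letters] using h

/-- A pair of words as a single list over `X ⊕ X`: the first word in left-hand letters, followed
by the second word in right-hand letters. -/
def encode {X : Type} (p : FreeSemigroup X × FreeSemigroup X) : List (X ⊕ X) :=
  (letters p.1).map Sum.inl ++ (letters p.2).map Sum.inr

lemma encode_injective {X : Type} : Function.Injective (encode (X := X)) := by
  -- Each component is recovered by selecting the letters of the corresponding side.
  have h1 : ∀ p : FreeSemigroup X × FreeSemigroup X,
      (encode p).filterMap Sum.getLeft? = letters p.1 := by
    intro p
    simp [encode, List.filterMap_append, List.filterMap_map, Function.comp_def]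
  have h2 : ∀ p : FreeSemigroup X × FreeSemigroup X,
      (encode p).filterMap Sum.getRight? = letters p.2 := by
    intro p
    simp [encode, List.filterMap_append, List.filterMap_map, Function.comp_def]
  intro p q h
  apply Prod.ext
  · apply letters_injective
    rw [← h1, ← h1, h]
  · apply letters_injective
    rw [← h2, ← h2, h]

lemma length_encode {X : Type} (p : FreeSemigroup X × FreeSemigroup X) :
    (encode p).length = p.1.length + p.2.length := by
  simp only [encode, letters, FreeSemigroup.length, List.length_append, List.length_map,
    List.length_cons]

/-- The map from the pairs counted by `gammaFn π n` to lists of length `n` given by `encode`. -/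
def encodeVector {X : Type} {S : Type*} [Mul S] (π : FreeSemigroup X →ₙ* S) (n : ℕ)
    (p : {p : FreeSemigroup X × FreeSemigroup X //
      p.1.length + p.2.length = n ∧ π p.1 = π p.2}) : List.Vector (X ⊕ X) n :=
  ⟨encode p.1, (length_encode p.1).trans p.2.1⟩

lemma encodeVector_injective {X : Type} {S : Type*} [Mul S] (π : FreeSemigroup X →ₙ* S) (n : ℕ) :
    Function.Injective (encodeVector π n) := fun _ _ h =>
  Subtype.ext (encode_injective (congrArg Subtype.val h))

lemma finite_pairs {X : Type} {S : Type*} [Mul S] [Fintype X] (π : FreeSemigroup X →ₙ* S) (n : ℕ) :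
    Finite {p : FreeSemigroup X × FreeSemigroup X //
      p.1.length + p.2.length = n ∧ π p.1 = π p.2} :=
  Finite.of_injective _ (encodeVector_injective π n)

lemma gammaFn_le_pow {X : Type} {S : Type*} [Mul S] [Fintype X]
    (π : FreeSemigroup X →ₙ* S) (n : ℕ) :
    gammaFn π n ≤ (Fintype.card X + Fintype.card X) ^ n := by
  have h := Nat.card_le_card_of_injective _ (encodeVector_injective π n)
  rwa [Nat.card_eq_fintype_card (α := List.Vector (X ⊕ X) n), card_vector,
    Fintype.card_sum] at h

/-- An injective operation on words that shifts the total length of a pair by `m` and sends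
`σ`-equal pairs to `τ`-equal pairs bounds the cogrowth function of `σ` by a shift of that
of `τ`. -/
lemma gammaFn_le_gammaFn {X : Type} {S : Type*} [Mul S] [Fintype X]
    (σ τ : FreeSemigroup X →ₙ* S) (f : FreeSemigroup X → FreeSemigroup X)
    (hf : Function.Injective f) (m : ℕ)
    (hlen : ∀ u v, (f u).length + (f v).length = u.length + v.length + m)
    (himp : ∀ u v, σ u = σ v → τ (f u) = τ (f v)) (n : ℕ) :
    gammaFn σ n ≤ gammaFn τ (n + m) := by
  have := finite_pairs τ (n + m)
  refine Nat.card_le_card_of_injective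
    (fun p => ⟨(f p.1.1, f p.1.2), ?_, himp _ _ p.2.2⟩) ?_
  · rw [hlen, p.2.1]
  · intro p q h
    have h' := congrArg Subtype.val h
    simp only [Prod.mk.injEq] at h'
    exact Subtype.ext (Prod.ext (hf h'.1) (hf h'.2))

lemma mul_left_injective_word {X : Type} (w : FreeSemigroup X) :
    Function.Injective (fun u => w * u) := by
  rintro ⟨a, l⟩ ⟨b, m⟩ h
  have h' := congrArg FreeSemigroup.tail h
  simpa using h'

lemma isBoundedUnder_gammaFn {X : Type} {S : Type*} [Mul S] [Fintype X]
    (π : FreeSemigroup X →ₙ* S) :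
    IsBoundedUnder (· ≤ ·) atTop (fun n : ℕ => (gammaFn π n : ℝ) ^ (1 / (n : ℝ))) := by
  refine isBoundedUnder_of_eventually_le (a := ((Fintype.card X + Fintype.card X : ℕ) : ℝ)) ?_
  filter_upwards [eventually_ne_atTop 0] with n hn
  have hn' : (0 : ℝ) < n := by exact_mod_cast Nat.pos_of_ne_zero hn
  rw [one_div, Real.rpow_inv_le_iff_of_pos (Nat.cast_nonneg _) (Nat.cast_nonneg _) hn',
    Real.rpow_natCast]
  exact_mod_cast gammaFn_le_pow π n

lemma gammaRate_le_of_shift {X : Type} {S : Type*} [Mul S] [Fintype X]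
    (σ τ : FreeSemigroup X →ₙ* S) (m : ℕ) (h : ∀ n, gammaFn σ n ≤ gammaFn τ (n + m)) :
    gammaRate σ ≤ gammaRate τ := by
  refine le_of_forall_gt_imp_ge_of_dense fun c hc => ?_
  have hev := eventually_lt_of_limsup_lt hc (isBoundedUnder_gammaFn τ)
  -- The roots are nonnegative, so any strict eventual upper bound is positive.
  have hc0 : 0 < c := by
    obtain ⟨n, hn⟩ := hev.exists
    exact lt_of_le_of_lt (by positivity) hn
  have hexp : Tendsto (fun n : ℕ => 1 + (m : ℝ) / (n : ℝ)) atTop (nhds (1 + 0)) :=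
    (tendsto_const_div_atTop_nhds_zero_nat (m : ℝ)).const_add 1
  have hlim : Tendsto (fun n : ℕ => c ^ (1 + (m : ℝ) / (n : ℝ))) atTop (nhds c) := by
    have h1 := (tendsto_const_nhds (x := c)).rpow hexp (Or.inl hc0.ne')
    simpa using h1
  rw [← hlim.limsup_eq]
  refine limsup_le_limsup ?_ ?_ hlim.isBoundedUnder_le
  · filter_upwards [(tendsto_add_atTop_nat m).eventually hev, eventually_ne_atTop 0] with n hn hn0
    have hnpos : (0 : ℝ) < n := by exact_mod_cast Nat.pos_of_ne_zero hn0
    have hnm : (0 : ℝ) < ((n + m : ℕ) : ℝ) := by push_cast; positivity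
    rw [one_div, Real.rpow_inv_lt_iff_of_pos (Nat.cast_nonneg _) hc0.le hnm] at hn
    rw [one_div, Real.rpow_inv_le_iff_of_pos (Nat.cast_nonneg _) (by positivity) hnpos,
      ← Real.rpow_mul hc0.le]
    have hmul : (1 + (m : ℝ) / n) * n = ((n + m : ℕ) : ℝ) := by
      push_cast
      field_simp
    rw [hmul]
    exact le_trans (by exact_mod_cast h n) hn.le
  · exact (isBoundedUnder_of_eventually_ge (a := 0)
      (Eventually.of_forall fun n => by positivity)).isCoboundedUnder_le

/-- If the semigroup `S` has an ideal `I` which is a monoid with identity `e`, then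
the global cogrowth rate of `S` (with respect to `π`) equals the global cogrowth
rate of `I` with respect to the induced choice of generators `ρ(w) = e·π(w)`.
(Since `I ↪ S`, two words represent the same element of `I` under `ρ` iff they do in `S`,
so `γ^{I,X}` is computed by `gammaRate ρ`.) -/
theorem stmt14 {X : Type} {S : Type*} [Semigroup S] [Fintype X] [Nonempty X]
    (π : FreeSemigroup X →ₙ* S) (hπ : Function.Surjective π)
    (I : Set S) (hI : IsIdeal I) (e : S) (he : e ∈ I)
    (hid : ∀ i ∈ I, e * i = i ∧ i * e = i)
    (ρ : FreeSemigroup X →ₙ* S) (hρ : ∀ w : FreeSemigroup X, ρ w = e * π w) :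
    gammaRate π = gammaRate ρ := by
  apply le_antisymm
  · refine gammaRate_le_of_shift π ρ 0 fun n =>
      gammaFn_le_gammaFn π ρ id Function.injective_id 0 (fun _ _ => rfl) ?_ n
    intro u v huv
    rw [id, id, hρ, hρ, huv]
  · obtain ⟨w, hw⟩ := hπ e
    refine gammaRate_le_of_shift ρ π (2 * w.length) fun n =>
      gammaFn_le_gammaFn ρ π (fun u => w * u) (mul_left_injective_word w) _ ?_ ?_ n
    · intro u v
      simp only [FreeSemigroup.length_mul]
      omega
    · intro u v huv
      rw [hρ, hρ] at huv
      rw [map_mul, map_mul, hw, huv]
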